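/- For the Robin heat kernel with parameter c > 0, p_R(τ; z, z') = p_B(τ; z, z') + p_B(τ; z, -z') - 2c ∫_0^∞ e^{-cv} p_B(τ; z, -v - z') dv, and for all τ₁, τ₂ > 0 and z₁, z₂ ≥ 0: ∫_0^∞ p_R(τ₁; z₁, u) p_R(τ₂; u, z₂) du = p_R(τ₁+τ₂; z₁, z₂). -/

import Mathlib

open MeasureTheory Real

noncomputable def pB (τ z z' : ℝ) : ℝ :=
  (Real.sqrt (2 * Real.pi * τ))⁻¹ * Real.exp (-(z - z') ^ 2 / (2 * τ))

/-- The Robin heat kernel with Robin parameter `c > 0`. -/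
noncomputable def pR (c τ z z' : ℝ) : ℝ :=
  pB τ z z' + pB τ z (-z')
    - 2 * c * ∫ v in Set.Ioi (0 : ℝ), Real.exp (-(c * v)) * pB τ z (-v - z')

/-- The one-variable Gaussian kernel `x ↦ pB τ x 0`. -/
noncomputable def gaussKernel (τ x : ℝ) : ℝ :=
  (Real.sqrt (2 * Real.pi * τ))⁻¹ * Real.exp (-x ^ 2 / (2 * τ))

/-- The boundary term of the Robin heat kernel, as a function of `s = z + z'`. -/
noncomputable def robinTail (c τ s : ℝ) : ℝ :=
  ∫ v in Set.Ioi (0 : ℝ), Real.exp (-(c * v)) * gaussKernel τ (s + v)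

theorem pR_eq_gaussKernel (c τ z z' : ℝ) :
    pR c τ z z' = gaussKernel τ (z - z') + gaussKernel τ (z + z')
      - 2 * c * robinTail c τ (z + z') := by
  have h (v : ℝ) : z - (-v - z') = z + z' + v := by ring
  simp only [pR, pB, gaussKernel, robinTail, sub_neg_eq_add, h]

theorem gaussKernel_neg (τ x : ℝ) : gaussKernel τ (-x) = gaussKernel τ x := by
  simp [gaussKernel]

theorem gaussKernel_nonneg (τ x : ℝ) : 0 ≤ gaussKernel τ x := by
  unfold gaussKernel; positivity

@[fun_prop]
theorem continuous_gaussKernel (τ : ℝ) : Continuous (gaussKernel τ) := by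
  unfold gaussKernel; fun_prop

theorem gaussKernel_anti {τ x y : ℝ} (hτ : 0 < τ) (hx : 0 ≤ x) (hxy : x ≤ y) :
    gaussKernel τ y ≤ gaussKernel τ x := by
  unfold gaussKernel
  gcongr

theorem gaussKernel_le_zero {τ : ℝ} (hτ : 0 < τ) (x : ℝ) :
    gaussKernel τ x ≤ gaussKernel τ 0 := by
  unfold gaussKernel
  gcongr (Real.sqrt (2 * Real.pi * τ))⁻¹ * Real.exp (-?_ / (2 * τ))
  nlinarith [sq_nonneg x]

theorem integrable_gaussKernel {τ : ℝ} (hτ : 0 < τ) : Integrable (gaussKernel τ) := by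
  have h := (integrable_exp_neg_mul_sq (b := (2 * τ)⁻¹) (by positivity)).const_mul
    (Real.sqrt (2 * Real.pi * τ))⁻¹
  refine h.congr (.of_forall fun x => ?_)
  simp only [gaussKernel]
  congr 2
  ring

theorem tendsto_gaussKernel_atTop {τ : ℝ} (hτ : 0 < τ) :
    Filter.Tendsto (gaussKernel τ) Filter.atTop (nhds 0) := by
  have h1 : Filter.Tendsto (fun x : ℝ => -x ^ 2 / (2 * τ)) Filter.atTop Filter.atBot :=
    (Filter.tendsto_neg_atTop_atBot.comp (Filter.tendsto_pow_atTop two_ne_zero)).atBot_div_const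
      (by positivity)
  have h2 := (Real.tendsto_exp_atBot.comp h1).const_mul (Real.sqrt (2 * Real.pi * τ))⁻¹
  rwa [mul_zero] at h2

theorem gaussKernel_mul {τ₁ τ₂ : ℝ} (hτ₁ : 0 < τ₁) (hτ₂ : 0 < τ₂) (a b u : ℝ) :
    gaussKernel τ₁ (a - u) * gaussKernel τ₂ (u + b) =
      gaussKernel (τ₁ + τ₂) (a + b) *
        gaussKernel (τ₁ * τ₂ / (τ₁ + τ₂)) (u - (a * τ₂ - b * τ₁) / (τ₁ + τ₂)) := by
  have hs : Real.sqrt (2 * π * τ₁) * Real.sqrt (2 * π * τ₂) =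
      Real.sqrt (2 * π * (τ₁ + τ₂)) * Real.sqrt (2 * π * (τ₁ * τ₂ / (τ₁ + τ₂))) := by
    rw [← Real.sqrt_mul (by positivity), ← Real.sqrt_mul (by positivity)]
    congr 1
    field_simp
  unfold gaussKernel
  rw [mul_mul_mul_comm, ← mul_inv, hs, mul_inv, ← Real.exp_add,
    mul_mul_mul_comm, ← Real.exp_add]
  congr 2
  field_simp
  ring

theorem integral_gaussKernel {τ : ℝ} (hτ : 0 < τ) : ∫ x, gaussKernel τ x = 1 := by
  have h : ∀ x, gaussKernel τ x =
      (Real.sqrt (2 * π * τ))⁻¹ * Real.exp (-(2 * τ)⁻¹ * x ^ 2) := fun x => by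
    unfold gaussKernel
    congr 2
    ring
  simp_rw [h]
  rw [integral_const_mul, integral_gaussian, show π / (2 * τ)⁻¹ = 2 * π * τ by
    rw [div_inv_eq_mul]; ring]
  exact inv_mul_cancel₀ (by positivity)

theorem integral_gaussKernel_mul {τ₁ τ₂ : ℝ} (hτ₁ : 0 < τ₁) (hτ₂ : 0 < τ₂) (a b : ℝ) :
    ∫ u, gaussKernel τ₁ (a - u) * gaussKernel τ₂ (u + b) = gaussKernel (τ₁ + τ₂) (a + b) := by
  simp_rw [gaussKernel_mul hτ₁ hτ₂]
  rw [integral_const_mul, integral_sub_right_eq_self (gaussKernel _),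
    integral_gaussKernel (by positivity), mul_one]

theorem integrableOn_exp_neg_mul {c : ℝ} (hc : 0 < c) :
    IntegrableOn (fun v : ℝ => Real.exp (-(c * v))) (Set.Ioi 0) := by
  simpa using exp_neg_integrableOn_Ioi 0 hc

theorem integral_exp_neg_mul_Ioi {c : ℝ} (hc : 0 < c) :
    ∫ v in Set.Ioi (0 : ℝ), Real.exp (-(c * v)) = c⁻¹ := by
  have h := integral_exp_mul_Ioi (neg_lt_zero.mpr hc) 0
  simpa [neg_div] using h

theorem integrableOn_exp_mul_gaussKernel {c τ : ℝ} (hc : 0 < c) (hτ : 0 < τ) (s : ℝ) :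
    IntegrableOn (fun v => Real.exp (-(c * v)) * gaussKernel τ (s + v)) (Set.Ioi 0) := by
  refine Integrable.mul_bdd (c := gaussKernel τ 0) (integrableOn_exp_neg_mul hc)
    (by fun_prop) (.of_forall fun v => ?_)
  rw [Real.norm_of_nonneg (gaussKernel_nonneg _ _)]
  exact gaussKernel_le_zero hτ _

theorem robinTail_nonneg (c τ s : ℝ) : 0 ≤ robinTail c τ s :=
  integral_nonneg fun _ => mul_nonneg (Real.exp_nonneg _) (gaussKernel_nonneg _ _)

theorem robinTail_le_of_forall {c τ s M : ℝ} (hc : 0 < c) (hτ : 0 < τ)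
    (h : ∀ v, 0 < v → gaussKernel τ (s + v) ≤ M) : robinTail c τ s ≤ c⁻¹ * M := by
  rw [← integral_exp_neg_mul_Ioi hc, ← integral_mul_const]
  refine setIntegral_mono_on (integrableOn_exp_mul_gaussKernel hc hτ s)
    ((integrableOn_exp_neg_mul hc).mul_const _) measurableSet_Ioi fun v hv => ?_
  exact mul_le_mul_of_nonneg_left (h v hv) (Real.exp_nonneg _)

theorem robinTail_le {c τ : ℝ} (hc : 0 < c) (hτ : 0 < τ) (s : ℝ) :
    robinTail c τ s ≤ c⁻¹ * gaussKernel τ 0 :=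
  robinTail_le_of_forall hc hτ fun _ _ => gaussKernel_le_zero hτ _

theorem robinTail_le_gaussKernel {c τ s : ℝ} (hc : 0 < c) (hτ : 0 < τ) (hs : 0 ≤ s) :
    robinTail c τ s ≤ c⁻¹ * gaussKernel τ s :=
  robinTail_le_of_forall hc hτ fun _ hv => gaussKernel_anti hτ hs (by linarith)

theorem robinTail_eq_exp_mul {c τ : ℝ} (hc : 0 < c) (hτ : 0 < τ) (s : ℝ) :
    robinTail c τ s = Real.exp (c * s) * (robinTail c τ 0 -
      ∫ w in (0 : ℝ)..s, Real.exp (-(c * w)) * gaussKernel τ w) := by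
  have hmul (s v : ℝ) : Real.exp (-(c * (s + v))) * gaussKernel τ (s + v) =
      Real.exp (-(c * s)) * (Real.exp (-(c * v)) * gaussKernel τ (s + v)) := by
    rw [← mul_assoc, ← Real.exp_add]
    ring_nf
  have hi (s : ℝ) : IntegrableOn (fun w => Real.exp (-(c * w)) * gaussKernel τ w) (Set.Ioi s) := by
    rw [← (measurePreserving_add_left volume s).integrableOn_comp_preimage
      (measurableEmbedding_addLeft s), Set.preimage_const_add_Ioi, sub_self]
    simpa only [Function.comp_def, hmul, IntegrableOn] using
      (integrableOn_exp_mul_gaussKernel hc hτ s).const_mul (Real.exp (-(c * s)))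
  have hs : robinTail c τ s = Real.exp (c * s) *
      ∫ w in Set.Ioi s, Real.exp (-(c * w)) * gaussKernel τ w := by
    rw [← (measurePreserving_add_left volume s).setIntegral_preimage_emb
      (measurableEmbedding_addLeft s), Set.preimage_const_add_Ioi, sub_self]
    simp_rw [hmul]
    rw [integral_const_mul, ← mul_assoc, ← Real.exp_add, add_neg_cancel, Real.exp_zero, one_mul,
      robinTail]
  have h0 : robinTail c τ 0 = ∫ w in Set.Ioi 0, Real.exp (-(c * w)) * gaussKernel τ w := by
    simp [robinTail]
  rw [hs, h0, ← intervalIntegral.integral_Ioi_sub_Ioi' (hi 0) (hi s)]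
  ring

theorem hasDerivAt_robinTail {c τ : ℝ} (hc : 0 < c) (hτ : 0 < τ) (s : ℝ) :
    HasDerivAt (robinTail c τ) (c * robinTail c τ s - gaussKernel τ s) s := by
  have hcont : Continuous fun w => Real.exp (-(c * w)) * gaussKernel τ w := by fun_prop
  have h1 := (hcont.integral_hasStrictDerivAt 0 s).hasDerivAt.const_sub (robinTail c τ 0)
  have h2 := ((hasDerivAt_id s).const_mul c).exp.mul h1
  rw [funext (robinTail_eq_exp_mul hc hτ)]
  refine h2.congr_deriv ?_
  have := Real.exp_add (c * s) (-(c * s))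
  simp only [add_neg_cancel, Real.exp_zero] at this
  simp only [id]
  linear_combination gaussKernel τ s * this

theorem continuous_robinTail {c τ : ℝ} (hc : 0 < c) (hτ : 0 < τ) : Continuous (robinTail c τ) :=
  continuous_iff_continuousAt.mpr fun s => (hasDerivAt_robinTail hc hτ s).continuousAt

theorem integral_gaussKernel_mul_robinTail {c τ₁ τ₂ : ℝ} (hc : 0 < c) (hτ₁ : 0 < τ₁)
    (hτ₂ : 0 < τ₂) (a b : ℝ) :
    ∫ u, gaussKernel τ₁ (a - u) * robinTail c τ₂ (u + b) = robinTail c (τ₁ + τ₂) (a + b) := by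
  have hint : Integrable (Function.uncurry fun u v : ℝ => gaussKernel τ₁ (a - u) *
      (Real.exp (-(c * v)) * gaussKernel τ₂ (u + b + v)))
      (volume.prod (volume.restrict (Set.Ioi 0))) := by
    have h := (((integrable_gaussKernel hτ₁).comp_sub_left a).mul_prod
      (integrableOn_exp_neg_mul hc)).mul_bdd (c := gaussKernel τ₂ 0)
      (g := fun p : ℝ × ℝ => gaussKernel τ₂ (p.1 + b + p.2))
      (Continuous.aestronglyMeasurable (by fun_prop)) (.of_forall fun p => by
        rw [Real.norm_of_nonneg (gaussKernel_nonneg _ _)]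
        exact gaussKernel_le_zero hτ₂ _)
    exact h.congr (.of_forall fun p => mul_assoc _ _ _)
  simp_rw [robinTail, ← integral_const_mul]
  rw [integral_integral_swap hint]
  refine integral_congr_ae (.of_forall fun v => ?_)
  simp only
  rw [add_assoc a, ← integral_gaussKernel_mul hτ₁ hτ₂, ← integral_const_mul]
  refine integral_congr_ae (.of_forall fun u => ?_)
  simp only [add_assoc]
  ring

/-- An integral over the half-line, with the reflected integrand moved to the right-hand side. -/
theorem integral_Ioi_eq_sub_reflect {f : ℝ → ℝ} (hf : Integrable f) :
    ∫ u in Set.Ioi 0, f u = (∫ u, f u) - ∫ u in Set.Ioi 0, f (-u) := by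
  have h := integral_comp_neg_Ioi 0 f
  rw [neg_zero] at h
  rw [h, ← intervalIntegral.integral_Iic_add_Ioi (b := 0) hf.integrableOn hf.integrableOn]
  ring

theorem integral_Ioi_reflection {c τ₁ τ₂ a b : ℝ} (hc : 0 < c) (hτ₁ : 0 < τ₁) (hτ₂ : 0 < τ₂)
    (ha : 0 ≤ a)
    (hi : IntegrableOn (fun u =>
      (gaussKernel τ₁ (a + u) - 2 * c * robinTail c τ₁ (a + u)) *
        (gaussKernel τ₂ (u - b) + gaussKernel τ₂ (u + b) - 2 * c * robinTail c τ₂ (u + b))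
      - gaussKernel τ₁ (a + u) * (gaussKernel τ₂ (u + b) +
        (gaussKernel τ₂ (-u + b) - 2 * c * robinTail c τ₂ (-u + b)))) (Set.Ioi 0)) :
    ∫ u in Set.Ioi 0, ((gaussKernel τ₁ (a + u) - 2 * c * robinTail c τ₁ (a + u)) *
        (gaussKernel τ₂ (u - b) + gaussKernel τ₂ (u + b) - 2 * c * robinTail c τ₂ (u + b))
      - gaussKernel τ₁ (a + u) * (gaussKernel τ₂ (u + b) +
        (gaussKernel τ₂ (-u + b) - 2 * c * robinTail c τ₂ (-u + b)))) = 0 := by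
  have hd (u : ℝ) : HasDerivAt (fun u => 2 * c * (robinTail c τ₁ (a + u) *
      (robinTail c τ₂ (u + b) - robinTail c τ₂ (-u + b))))
      ((gaussKernel τ₁ (a + u) - 2 * c * robinTail c τ₁ (a + u)) *
        (gaussKernel τ₂ (u - b) + gaussKernel τ₂ (u + b) - 2 * c * robinTail c τ₂ (u + b))
      - gaussKernel τ₁ (a + u) * (gaussKernel τ₂ (u + b) +
        (gaussKernel τ₂ (-u + b) - 2 * c * robinTail c τ₂ (-u + b)))) u := by
    have h1 := (hasDerivAt_robinTail hc hτ₁ (a + u)).comp_const_add a u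
    have h2 := (hasDerivAt_robinTail hc hτ₂ (u + b)).comp_add_const u b
    have h3 := (hasDerivAt_robinTail hc hτ₂ (-u + b)).comp u ((hasDerivAt_neg u).add_const b)
    refine ((h1.mul (h2.sub h3)).const_mul (2 * c)).congr_deriv ?_
    rw [← neg_sub b u, gaussKernel_neg, sub_eq_neg_add b u]
    simp only [Function.comp_apply, Pi.sub_apply]
    ring
  have ht : Filter.Tendsto (fun u => 2 * c * (robinTail c τ₁ (a + u) *
      (robinTail c τ₂ (u + b) - robinTail c τ₂ (-u + b)))) Filter.atTop (nhds 0) := by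
    have h0 : Filter.Tendsto (fun u => robinTail c τ₁ (a + u)) Filter.atTop (nhds 0) := by
      have hg := ((tendsto_gaussKernel_atTop hτ₁).comp
        (Filter.tendsto_atTop_add_const_left Filter.atTop a Filter.tendsto_id)).const_mul c⁻¹
      rw [mul_zero] at hg
      refine squeeze_zero' (.of_forall fun u => robinTail_nonneg _ _ _) ?_ hg
      filter_upwards [Filter.eventually_ge_atTop 0] with u hu
      exact robinTail_le_gaussKernel hc hτ₁ (add_nonneg ha hu)
    have hb := h0.zero_mul_isBoundedUnder_le
      (g := fun u => robinTail c τ₂ (u + b) - robinTail c τ₂ (-u + b))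
      ⟨c⁻¹ * gaussKernel τ₂ 0, by
        refine Filter.eventually_map.mpr (.of_forall fun u => ?_)
        refine abs_le.mpr ?_
        constructor <;> linarith [robinTail_nonneg c τ₂ (u + b), robinTail_nonneg c τ₂ (-u + b),
          robinTail_le hc hτ₂ (u + b), robinTail_le hc hτ₂ (-u + b)]⟩
    simpa using hb.const_mul (2 * c)
  rw [integral_Ioi_of_hasDerivAt_of_tendsto' (fun u _ => hd u) hi ht]
  simp

theorem robin_halfline_semigroup (c : ℝ) (hc : 0 < c) (τ₁ τ₂ : ℝ)
    (hτ₁ : 0 < τ₁) (hτ₂ : 0 < τ₂) (z₁ z₂ : ℝ) (hz₁ : 0 ≤ z₁) (hz₂ : 0 ≤ z₂) :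
    ∫ u in Set.Ioi (0 : ℝ), pR c τ₁ z₁ u * pR c τ₂ u z₂ = pR c (τ₁ + τ₂) z₁ z₂ := by
  have hJ₁ := continuous_robinTail hc hτ₁
  have hJ₂ := continuous_robinTail hc hτ₂
  have hgb {τ : ℝ} (hτ : 0 < τ) (x : ℝ) : ‖gaussKernel τ x‖ ≤ gaussKernel τ 0 := by
    rw [Real.norm_of_nonneg (gaussKernel_nonneg _ _)]
    exact gaussKernel_le_zero hτ _
  have hJb {τ : ℝ} (hτ : 0 < τ) (x : ℝ) : ‖robinTail c τ x‖ ≤ c⁻¹ * gaussKernel τ 0 := by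
    rw [Real.norm_of_nonneg (robinTail_nonneg _ _ _)]
    exact robinTail_le hc hτ _
  have hA₀ := (integrable_gaussKernel hτ₁).comp_sub_left z₁
  have hgA : Integrable fun u => gaussKernel τ₁ (z₁ - u) * gaussKernel τ₂ (u + -z₂) :=
    hA₀.mul_bdd (Continuous.aestronglyMeasurable (by fun_prop)) (.of_forall fun _ => hgb hτ₂ _)
  have hgB : Integrable fun u => gaussKernel τ₁ (z₁ - u) * gaussKernel τ₂ (u + z₂) :=
    hA₀.mul_bdd (Continuous.aestronglyMeasurable (by fun_prop)) (.of_forall fun _ => hgb hτ₂ _)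
  have hgJ : Integrable fun u => gaussKernel τ₁ (z₁ - u) * robinTail c τ₂ (u + z₂) :=
    hA₀.mul_bdd (Continuous.aestronglyMeasurable (by fun_prop)) (.of_forall fun _ => hJb hτ₂ _)
  have hf := (hgA.add hgB).sub (hgJ.const_mul (2 * c))
  have hfull : ∫ u, gaussKernel τ₁ (z₁ - u) * pR c τ₂ u z₂ = pR c (τ₁ + τ₂) z₁ z₂ := by
    rw [pR_eq_gaussKernel, sub_eq_add_neg z₁, ← integral_gaussKernel_mul hτ₁ hτ₂,
      ← integral_gaussKernel_mul hτ₁ hτ₂, ← integral_gaussKernel_mul_robinTail hc hτ₁ hτ₂,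
      ← integral_add hgA hgB, ← integral_const_mul,
      ← integral_sub (by exact hgA.add hgB) (hgJ.const_mul (2 * c))]
    refine integral_congr_ae (.of_forall fun u => ?_)
    simp only [pR_eq_gaussKernel, sub_eq_add_neg u]
    ring
  have hfi : Integrable fun u => gaussKernel τ₁ (z₁ - u) * pR c τ₂ u z₂ := by
    refine hf.congr (.of_forall fun u => ?_)
    simp only [pR_eq_gaussKernel, sub_eq_add_neg u, Pi.add_apply, Pi.sub_apply]
    ring
  have hpc : Continuous fun u => pR c τ₂ u z₂ := by
    simp only [pR_eq_gaussKernel]; fun_prop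
  have hKi : IntegrableOn (fun u => (gaussKernel τ₁ (z₁ + u) - 2 * c * robinTail c τ₁ (z₁ + u)) *
      pR c τ₂ u z₂) (Set.Ioi 0) := by
    have hg : IntegrableOn (fun u => gaussKernel τ₁ (z₁ + u)) (Set.Ioi 0) :=
      ((integrable_gaussKernel hτ₁).comp_add_left z₁).integrableOn
    have hJ : IntegrableOn (fun u => robinTail c τ₁ (z₁ + u)) (Set.Ioi 0) := by
      refine (hg.const_mul c⁻¹).mono' (by fun_prop) ?_
      filter_upwards [ae_restrict_mem measurableSet_Ioi] with u hu
      rw [Real.norm_of_nonneg (robinTail_nonneg _ _ _)]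
      exact robinTail_le_gaussKernel hc hτ₁ (add_nonneg hz₁ (le_of_lt hu))
    refine (hg.sub (hJ.const_mul (2 * c))).mul_bdd
      (c := gaussKernel τ₂ 0 + gaussKernel τ₂ 0 + ‖2 * c‖ * (c⁻¹ * gaussKernel τ₂ 0))
      hpc.aestronglyMeasurable (.of_forall fun u => ?_)
    rw [pR_eq_gaussKernel]
    refine (norm_sub_le _ _).trans (add_le_add ((norm_add_le _ _).trans
      (add_le_add (hgb hτ₂ _) (hgb hτ₂ _))) ?_)
    rw [norm_mul]
    exact mul_le_mul_of_nonneg_left (hJb hτ₂ _) (norm_nonneg _)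
  have hri : IntegrableOn (fun u => gaussKernel τ₁ (z₁ - -u) * pR c τ₂ (-u) z₂) (Set.Ioi 0) :=
    hfi.comp_neg.integrableOn
  have hΦ (u : ℝ) : (gaussKernel τ₁ (z₁ + u) - 2 * c * robinTail c τ₁ (z₁ + u)) * pR c τ₂ u z₂ -
      gaussKernel τ₁ (z₁ - -u) * pR c τ₂ (-u) z₂ =
      (gaussKernel τ₁ (z₁ + u) - 2 * c * robinTail c τ₁ (z₁ + u)) *
        (gaussKernel τ₂ (u - z₂) + gaussKernel τ₂ (u + z₂) - 2 * c * robinTail c τ₂ (u + z₂))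
      - gaussKernel τ₁ (z₁ + u) * (gaussKernel τ₂ (u + z₂) +
        (gaussKernel τ₂ (-u + z₂) - 2 * c * robinTail c τ₂ (-u + z₂))) := by
    rw [pR_eq_gaussKernel, pR_eq_gaussKernel, sub_neg_eq_add, ← neg_add', gaussKernel_neg]
    ring
  have hzero := integral_Ioi_reflection (b := z₂) hc hτ₁ hτ₂ hz₁
    ((hKi.sub hri).congr (.of_forall hΦ))
  simp_rw [← hΦ] at hzero
  rw [integral_sub hKi hri] at hzero
  have hsplit : ∫ u in Set.Ioi (0 : ℝ), pR c τ₁ z₁ u * pR c τ₂ u z₂ =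
      (∫ u in Set.Ioi (0 : ℝ), gaussKernel τ₁ (z₁ - u) * pR c τ₂ u z₂) +
      ∫ u in Set.Ioi (0 : ℝ), (gaussKernel τ₁ (z₁ + u) - 2 * c * robinTail c τ₁ (z₁ + u)) *
        pR c τ₂ u z₂ := by
    rw [← integral_add hfi.integrableOn hKi]
    refine integral_congr_ae (.of_forall fun u => ?_)
    simp only [pR_eq_gaussKernel c τ₁]
    ring
  rw [hsplit, integral_Ioi_eq_sub_reflect hfi, hfull]
  linarith
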